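/- Let p be a prime, let G be a non-abelian group of order p³, and let S ⊆ G with S = S^{-1}, 1 ∉ S and S generating G. Then the Hamilton compression of the Cayley graph Cay(G,S) satisfies κ(Cay(G,S)) ≥ p; that is, Cay(G,S) has a Hamilton cycle admitting a rotational symmetry of order p. -/

import Mathlib

open SimpleGraph

/-- The automorphism group of a simple graph, as a subgroup of the permutation group
of the vertex set. -/
def autSubgroup {V : Type*} (X : SimpleGraph V) : Subgroup (Equiv.Perm V) where
  carrier := {π | ∀ u v : V, X.Adj (π u) (π v) ↔ X.Adj u v}
  one_mem' := fun u v => Iff.rfl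
  mul_mem' := fun {a b} ha hb u v => (ha (b u) (b v)).trans (hb u v)
  inv_mem' := fun {a} ha u v => by simpa using (ha (a⁻¹ u) (a⁻¹ v)).symm

/-- `c` is a Hamilton cycle of `X`, presented as a cyclic enumeration
`v_0, v_1, …, v_{N-1}` of the vertices (indices modulo `N = |V|`) with consecutive
vertices adjacent. -/
def IsHamCycle {V : Type*} [Fintype V] (X : SimpleGraph V)
    (c : ZMod (Fintype.card V) → V) : Prop :=
  Function.Bijective c ∧ ∀ i, X.Adj (c i) (c (i + 1))

/-- The Hamilton cycle `c` of `X` is `k`-symmetric: `k ∣ N` and some automorphism `α`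
of `X` satisfies `α (v_i) = v_{i + N/k}` for all `i`. -/
def IsSymmHamCycle {V : Type*} [Fintype V] (X : SimpleGraph V)
    (c : ZMod (Fintype.card V) → V) (k : ℕ) : Prop :=
  k ∣ Fintype.card V ∧
    ∃ α ∈ autSubgroup X, ∀ i, α (c i) = c (i + (Fintype.card V / k : ℕ))

/-- The Hamilton compression `κ(X)` of a graph `X`: the largest `k` such that some
Hamilton cycle of `X` is `k`-symmetric (and `0` if `X` has no Hamilton cycle). -/
noncomputable def hamiltonCompression {V : Type*} [Fintype V] (X : SimpleGraph V) : ℕ :=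
  sSup {k | ∃ c, IsHamCycle X c ∧ IsSymmHamCycle X c k}

/-- The metacirculant graph `X(m,n;r)` on vertex set `ℤ/m × ℤ/n`: vertex `(i,j)` is
adjacent to `(i, j ± r^i)` and `(i ± 1, j)`. -/
def metaGraph (m n : ℕ) (r : (ZMod n)ˣ) : SimpleGraph (ZMod m × ZMod n) :=
  SimpleGraph.fromRel (fun u v =>
    (u.1 = v.1 ∧ v.2 = u.2 + (r : ZMod n) ^ u.1.val) ∨ (u.2 = v.2 ∧ v.1 = u.1 + 1))

/-- The Cayley graph of a group `G` with connection set `S` (for symmetric `S`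
with `1 ∉ S` this is the usual Cayley graph: `g ~ h` iff `g⁻¹ * h ∈ S`). -/
def cayleyGraph {G : Type*} [Group G] (S : Set G) : SimpleGraph G :=
  SimpleGraph.fromRel (fun g h => g⁻¹ * h ∈ S)

/-! Write `Z` for the center of `G`. A walk `c` visiting all of `G` with `c (m + n) = g * c m`,
where `|G| = k * n` and `g ^ k = 1`, is a Hamilton cycle with a `k`-fold rotational symmetry.

Choose `a, b ∈ S` not commuting and let `h = b ^ (p - 1) * a`. The walk repeating the steps
`b, …, b, a` (with `p - 1` copies of `b`) passes through all `h ^ i * b ^ j` and satisfies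
`c (m + p²) = h ^ p * c m`. If `h ^ p ≠ 1`, then `h ^ p` generates `Z`, so the walk visits all
of `G`. If `h ^ p = 1`, the walk is closed after `p²` steps; replacing every `p²`-th step, a `b`,
by `a` makes it equivariant under `d = a * b⁻¹`, and now it passes through all
`d ^ k * h ^ i * b ^ j`. As `h * d⁻¹` is central, this is all of `G` and `d ^ p = h ^ p = 1`,
unless `h = d`. If `h = d`, replace `(a, b)` by `(a⁻¹, b)` for odd `p` and by `(b, a)` for
`p = 2`. -/

section Walks

variable {G : Type*} [Group G] {S : Set G} {a b d g : G} {k n : ℕ} {c : ℕ → G}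

lemma le_hamiltonCompression {V : Type*} [Fintype V] {X : SimpleGraph V}
    {c : ZMod (Fintype.card V) → V} {k : ℕ} (hc : IsHamCycle X c) (hk : IsSymmHamCycle X c k) :
    k ≤ hamiltonCompression X := by
  refine le_csSup ⟨Fintype.card V, ?_⟩ ⟨c, hc, hk⟩
  rintro l ⟨_, _, hl, _⟩
  exact Nat.le_of_dvd (Fintype.card_pos_iff.2 ⟨c 0⟩) hl

lemma mulLeft_mem_autSubgroup_cayleyGraph (S : Set G) (g : G) :
    Equiv.mulLeft g ∈ autSubgroup (cayleyGraph S) := fun u v => by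
  simp [cayleyGraph, mul_assoc]

lemma apply_zmodVal_add_natCast {α : Type*} {f : ℕ → α} {N : ℕ} [NeZero N]
    (hf : Function.Periodic f N) (i : ZMod N) (m : ℕ) :
    f (i + m).val = f (i.val + m) := by
  rw [ZMod.val_add, ZMod.val_natCast, Nat.add_mod_mod, hf.map_mod_nat]

/-- An infinite walk `c` in the Cayley (di)graph of `S` that left multiplication by `g` shifts by
`n` positions. For `g = 1` this is a closed walk of length `n`, traversed periodically. -/
structure IsTwistedWalk (S : Set G) (g : G) (n : ℕ) (c : ℕ → G) : Prop where
  step_mem : ∀ m, (c m)⁻¹ * c (m + 1) ∈ S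
  apply_add : ∀ m, c (m + n) = g * c m

namespace IsTwistedWalk

lemma apply_add_mul (hc : IsTwistedWalk S g n c) (m k : ℕ) : c (m + k * n) = g ^ k * c m := by
  induction k with
  | zero => simp
  | succ k ih => rw [Nat.succ_mul, ← add_assoc, hc.apply_add, ih, pow_succ', mul_assoc]

lemma periodic (hc : IsTwistedWalk S g n c) (hg : g ^ k = 1) : Function.Periodic c (k * n) :=
  fun m => by rw [hc.apply_add_mul, hg, one_mul]

lemma le_hamiltonCompression [Fintype G] (hc : IsTwistedWalk S g n c) (hg : g ^ k = 1)
    (hcard : Fintype.card G = k * n) (hsurj : Function.Surjective c) (h1 : (1 : G) ∉ S) :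
    k ≤ hamiltonCompression (cayleyGraph S) := by
  have hper : Function.Periodic c (Fintype.card G) := hcard ▸ hc.periodic hg
  have hshift := apply_zmodVal_add_natCast hper
  have hbij : Function.Bijective fun i : ZMod (Fintype.card G) => c i.val := by
    refine (Fintype.bijective_iff_surjective_and_card _).2 ⟨fun x => ?_, ZMod.card _⟩
    obtain ⟨m, rfl⟩ := hsurj x
    exact ⟨m, by simpa using hshift 0 m⟩
  refine _root_.le_hamiltonCompression ⟨hbij, fun i => ?_⟩
    ⟨Dvd.intro n hcard.symm, Equiv.mulLeft g, mulLeft_mem_autSubgroup_cayleyGraph S g, fun i => ?_⟩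
  · have hstep := hc.step_mem i.val
    have hne : c i.val ≠ c (i.val + 1) := fun h => h1 (by simpa [← h] using hstep)
    have hsucc : c (i + 1).val = c (i.val + 1) := by simpa using hshift i 1
    rw [hsucc]
    exact (SimpleGraph.fromRel_adj _ _ _).2 ⟨hne, Or.inl hstep⟩
  · have hk : 0 < k := Nat.pos_of_mul_pos_right (hcard ▸ Fintype.card_pos)
    have hquot : Fintype.card G / k = n := by rw [hcard, Nat.mul_div_cancel_left n hk]
    simp only [Equiv.coe_mulLeft, hshift, hquot, hc.apply_add]

-- The index shift makes the modified step `c 0 → c 1` the last one of each period.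
lemma modifyStep (hc : IsTwistedWalk S 1 n c) (hn : 0 < n) (hd : (c 0)⁻¹ * (d * c 1) ∈ S) :
    IsTwistedWalk S d n fun m => d ^ (m / n) * c (m + 1) where
  step_mem m := by
    have hper : Function.Periodic c n := by simpa using hc.periodic (one_pow 1)
    by_cases hm : n ∣ m + 1
    · have hzero : c (m + 1) = c 0 := by rw [← hper.map_mod_nat, Nat.mod_eq_zero_of_dvd hm]
      have hone : c (m + 1 + 1) = c 1 := by
        rw [← hper.map_mod_nat, Nat.add_mod, Nat.mod_eq_zero_of_dvd hm, zero_add, Nat.mod_mod,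
          hper.map_mod_nat]
      rw [Nat.succ_div_of_dvd hm, hzero, hone, pow_succ]
      simpa [mul_assoc] using hd
    · rw [Nat.succ_div_of_not_dvd hm]
      simpa [mul_assoc] using hc.step_mem (m + 1)
  apply_add m := by
    rw [Nat.add_div_right m hn, add_right_comm, hc.apply_add, one_mul, pow_succ', mul_assoc]

lemma surjective_modifyStep (hc : IsTwistedWalk S 1 n c) (hn : 0 < n)
    (hcover : ∀ x, ∃ k m : ℕ, x = d ^ k * c m) :
    Function.Surjective fun m => d ^ (m / n) * c (m + 1) := by
  intro x
  obtain ⟨k, m, rfl⟩ := hcover x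
  have hper : Function.Periodic c n := by simpa using hc.periodic (one_pow 1)
  set r := (m + (n - 1)) % n with hr
  have hdiv : (r + k * n) / n = k := by
    rw [Nat.add_mul_div_right _ _ hn, Nat.div_eq_of_lt (Nat.mod_lt _ hn), zero_add]
  have hmod : (r + k * n + 1) % n = m % n := by
    have hshift : m + (n - 1) + 1 = m + n := by omega
    rw [add_right_comm, Nat.add_mul_mod_self_right, hr, Nat.mod_add_mod, hshift,
      Nat.add_mod_right]
  exact ⟨r + k * n, by simp only [hdiv, ← hper.map_mod_nat (r + k * n + 1), hmod,
    hper.map_mod_nat m]⟩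

end IsTwistedWalk

/-- The walk from `1` that repeats `n - 1` steps `b` followed by one step `a`, given by its
vertices. -/
def rowWalk (n : ℕ) (a b : G) (m : ℕ) : G :=
  (b ^ (n - 1) * a) ^ (m / n) * b ^ (m % n)

lemma rowWalk_mul_add {j : ℕ} (hj : j < n) (a b : G) (i : ℕ) :
    rowWalk n a b (n * i + j) = (b ^ (n - 1) * a) ^ i * b ^ j := by
  rw [rowWalk, Nat.mul_add_div (by omega), Nat.div_eq_of_lt hj, add_zero, Nat.mul_add_mod,
    Nat.mod_eq_of_lt hj]

lemma isTwistedWalk_rowWalk (ha : a ∈ S) (hb : b ∈ S) (hn : 0 < n) (k : ℕ) :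
    IsTwistedWalk S ((b ^ (n - 1) * a) ^ k) (n * k) (rowWalk n a b) where
  step_mem m := by
    obtain ⟨i, j, hj, rfl⟩ : ∃ i j, j < n ∧ m = n * i + j :=
      ⟨m / n, m % n, Nat.mod_lt m hn, (Nat.div_add_mod m n).symm⟩
    rcases Nat.lt_or_ge (j + 1) n with hlt | hge
    · rw [add_assoc, rowWalk_mul_add hj, rowWalk_mul_add hlt, pow_succ]
      simpa [mul_assoc] using hb
    · obtain rfl : j = n - 1 := by omega
      have hnext : n * i + (n - 1) + 1 = n * (i + 1) + 0 := by rw [mul_add]; omega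
      rw [hnext, rowWalk_mul_add hj, rowWalk_mul_add hn, pow_succ]
      simpa [mul_assoc] using ha
  apply_add m := by
    rw [rowWalk, rowWalk, Nat.add_mul_div_left _ _ hn, Nat.add_mul_mod_self_left, add_comm, pow_add,
      mul_assoc]

end Walks

section PrimeCube

open Subgroup

variable {G : Type*} [Group G] {p : ℕ} [Fact p.Prime]

lemma exists_eq_mul_pow_of_index_prime {H : Subgroup G} [H.Normal] (hH : H.index = p) {b : G}
    (hb : b ∉ H) (x : G) : ∃ y ∈ H, ∃ j < p, x = y * b ^ j := by
  have hcard : Nat.card (G ⧸ H) = p := hH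
  have hb' : (b : G ⧸ H) ≠ 1 := mt (QuotientGroup.eq_one_iff b).1 hb
  obtain ⟨j, hj⟩ := mem_powers_of_prime_card hcard hb' (g' := (x : G ⧸ H))
  have hmod : (b : G ⧸ H) ^ (j % p) = x :=
    (hcard ▸ pow_mod_natCard (b : G ⧸ H) j).trans hj
  refine ⟨x * (b ^ (j % p))⁻¹, ?_, j % p, Nat.mod_lt _ (NeZero.pos p), by group⟩
  rw [← QuotientGroup.eq_one_iff, QuotientGroup.mk_mul, QuotientGroup.mk_inv, QuotientGroup.mk_pow,
    hmod, mul_inv_cancel]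

lemma exists_pow_eq_of_mem_of_card_prime {H : Subgroup G} (hH : Nat.card H = p) {z w : G}
    (hz : z ∈ H) (hz1 : z ≠ 1) (hw : w ∈ H) : ∃ i : ℕ, z ^ i = w := by
  obtain ⟨i, hi⟩ := mem_powers_of_prime_card hH (g := ⟨z, hz⟩) (g' := ⟨w, hw⟩)
    (by simpa [Subtype.ext_iff] using hz1)
  exact ⟨i, congrArg Subtype.val hi⟩

lemma index_center_of_card_eq_prime_cube (hG : Nat.card G = p ^ 3) (hG' : ¬ IsMulCommutative G) :
    (center G).index = p ^ 2 := by
  have hp : p.Prime := Fact.out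
  obtain ⟨k, hk, hcenter⟩ := IsPGroup.card_center_eq_prime_pow hG (by norm_num)
  obtain ⟨j, -, hindex⟩ := (Nat.dvd_prime_pow hp).1 (hG ▸ (center G).index_dvd_card)
  have hsum : k + j = 3 := Nat.pow_right_injective hp.two_le <| by
    simp only [pow_add, ← hcenter, ← hindex, card_mul_index, hG]
  have hj : ¬ j ≤ 1 := fun hj => hG' <| by
    have : IsCyclic (G ⧸ center G) :=
      isCyclic_of_card_dvd_prime (p := p) (hindex.dvd.trans (pow_dvd_pow p hj |>.trans (by simp)))
    exact isMulCommutative_of_isCyclic_quotient_center_self G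
  rw [hindex, show j = 2 by omega]

lemma card_center_of_card_eq_prime_cube (hG : Nat.card G = p ^ 3) (hG' : ¬ IsMulCommutative G) :
    Nat.card (center G) = p := by
  have hmul := (center G).card_mul_index
  rw [index_center_of_card_eq_prime_cube hG hG', hG, pow_succ' p 2] at hmul
  exact Nat.eq_of_mul_eq_mul_right (pow_pos (NeZero.pos p) 2) hmul

lemma commutator_le_center_of_card_eq_prime_cube (hG : Nat.card G = p ^ 3)
    (hG' : ¬ IsMulCommutative G) : commutator G ≤ center G :=
  Normal.quotient_commutative_iff_commutator_le.1 <|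
    IsPGroup.isMulCommutative_of_card_eq_prime_sq (index_center_of_card_eq_prime_cube hG hG')

lemma pow_mem_center_of_card_eq_prime_cube (hG : Nat.card G = p ^ 3) (hG' : ¬ IsMulCommutative G)
    (x : G) : x ^ p ∈ center G := by
  have hcyclic : ¬ IsCyclic (G ⧸ center G) := fun _ =>
    hG' (isMulCommutative_of_isCyclic_quotient_center_self G)
  have hexp : Monoid.exponent (G ⧸ center G) = p :=
    (not_isCyclic_iff_exponent_eq_prime Fact.out (index_center_of_card_eq_prime_cube hG hG')).1
      hcyclic
  rw [← QuotientGroup.eq_one_iff, QuotientGroup.mk_pow]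
  exact hexp ▸ Monoid.pow_exponent_eq_one (x : G ⧸ center G)

lemma pow_eq_one_of_mem_center_of_card_eq_prime_cube (hG : Nat.card G = p ^ 3)
    (hG' : ¬ IsMulCommutative G) {z : G} (hz : z ∈ center G) : z ^ p = 1 := by
  have hdvd := (center G).orderOf_dvd_natCard hz
  rw [card_center_of_card_eq_prime_cube hG hG'] at hdvd
  exact orderOf_dvd_iff_pow_eq_one.1 hdvd

lemma not_isMulCommutative_of_not_commute {a b : G} (hab : ¬ Commute a b) :
    ¬ IsMulCommutative G := fun _ => hab (mul_comm' a b)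

lemma exists_eq_mul_mul_pow_of_not_commute (hG : Nat.card G = p ^ 3) {u b : G}
    (hub : ¬ Commute u b) (x : G) :
    ∃ y ∈ zpowers u, ∃ z ∈ center G, ∃ j < p, x = y * z * b ^ j := by
  have hG' := not_isMulCommutative_of_not_commute hub
  set H : Subgroup G := zpowers u ⊔ center G
  have hle : H ≤ centralizer {u} :=
    sup_le (zpowers_le.2 (mem_centralizer_singleton_iff.2 rfl)) (center_le_centralizer _)
  have hb : b ∉ H := fun hb => hub (mem_centralizer_singleton_iff.1 (hle hb)).symm
  have hu : ¬ H ≤ center G := fun h =>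
    hub (mem_center_iff.1 (h (mem_sup_left (mem_zpowers u))) b).symm
  have hindex : H.index = p := by
    have hmul : (center G).relIndex H * H.index = p ^ 2 :=
      (relIndex_mul_index le_sup_right).trans (index_center_of_card_eq_prime_cube hG hG')
    have htop : H ≠ ⊤ := fun h => hb (h ▸ mem_top b)
    exact ((Nat.Prime.mul_eq_prime_sq_iff Fact.out (mt relIndex_eq_one.1 hu)
      (mt index_eq_one.1 htop)).1 hmul).2
  have : H.Normal := Normal.of_commutator_le G <|
    (commutator_le_center_of_card_eq_prime_cube hG hG').trans le_sup_right
  obtain ⟨w, hw, j, hj, rfl⟩ := exists_eq_mul_pow_of_index_prime hindex hb x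
  obtain ⟨y, hy, z, hz, rfl⟩ := mem_sup_of_normal_right.1 hw
  exact ⟨y, hy, z, hz, j, hj, rfl⟩

end PrimeCube

section RowWalk

open Subgroup commutatorElement

variable {G : Type*} [Group G] {p : ℕ} [Fact p.Prime] {S : Set G} {a b : G}

lemma surjective_rowWalk (hG : Nat.card G = p ^ 3) (hab : ¬ Commute a b)
    (hpow : (b ^ (p - 1) * a) ^ p ≠ 1) : Function.Surjective (rowWalk p a b) := by
  intro x
  have : Finite G := Nat.finite_of_card_ne_zero (hG ▸ pow_ne_zero 3 (NeZero.ne p))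
  have hG' := not_isMulCommutative_of_not_commute hab
  set h := b ^ (p - 1) * a with hh
  have hhb : ¬ Commute h b := fun hc => hab <| by
    simpa [hh] using ((Commute.refl b).pow_left (p - 1)).inv_left.mul_left hc
  obtain ⟨y, hy, z, hz, j, hj, rfl⟩ := exists_eq_mul_mul_pow_of_not_commute hG hhb x
  obtain ⟨i, rfl⟩ := exists_pow_eq_of_mem_of_card_prime (card_center_of_card_eq_prime_cube hG hG')
    (pow_mem_center_of_card_eq_prime_cube hG hG' h) hpow hz
  obtain ⟨l, hl⟩ : y * (h ^ p) ^ i ∈ Submonoid.powers h :=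
    mem_powers_iff_mem_zpowers.2 (mul_mem hy (pow_mem (pow_mem (mem_zpowers h) p) i))
  exact ⟨p * l + j, by rw [rowWalk_mul_add hj, ← hh, ← hl]⟩

lemma pow_pred_mul_mul_inv_mem_center (hG : Nat.card G = p ^ 3) (hG' : ¬ IsMulCommutative G)
    (a b : G) : b ^ (p - 1) * a * (a * b⁻¹)⁻¹ ∈ center G := by
  have hfactor : b ^ (p - 1) * a * (a * b⁻¹)⁻¹ = b ^ p * ⁅b⁻¹, a⁆ := by
    rw [← Nat.sub_add_cancel (NeZero.pos p), pow_succ, Nat.add_sub_cancel, commutatorElement_def]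
    group
  rw [hfactor]
  exact mul_mem (pow_mem_center_of_card_eq_prime_cube hG hG' b)
    (commutator_le_center_of_card_eq_prime_cube hG hG'
      (commutator_mem_commutator (mem_top _) (mem_top _)))

lemma mul_inv_pow_eq_pow_pred_mul_pow (hG : Nat.card G = p ^ 3) (hG' : ¬ IsMulCommutative G)
    (a b : G) : (a * b⁻¹) ^ p = (b ^ (p - 1) * a) ^ p := by
  have hz := pow_pred_mul_mul_inv_mem_center hG hG' a b
  have hcomm : Commute (b ^ (p - 1) * a * (a * b⁻¹)⁻¹) (a * b⁻¹) := (mem_center_iff.1 hz _).symm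
  have hpow := hcomm.mul_pow p
  rwa [inv_mul_cancel_right, pow_eq_one_of_mem_center_of_card_eq_prime_cube hG hG' hz, one_mul,
    eq_comm] at hpow

lemma exists_eq_pow_mul_rowWalk (hG : Nat.card G = p ^ 3) (hab : ¬ Commute a b)
    (hne : b ^ (p - 1) * a ≠ a * b⁻¹) (x : G) :
    ∃ k m : ℕ, x = (a * b⁻¹) ^ k * rowWalk p a b m := by
  have : Finite G := Nat.finite_of_card_ne_zero (hG ▸ pow_ne_zero 3 (NeZero.ne p))
  have hG' := not_isMulCommutative_of_not_commute hab
  have hz₀ := pow_pred_mul_mul_inv_mem_center hG hG' a b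
  set d := a * b⁻¹ with hd
  set h := b ^ (p - 1) * a with hh
  have hdb : ¬ Commute d b := fun hc => hab <| by simpa [hd] using hc.mul_left (Commute.refl b)
  have hhd : Commute h d := by
    simpa using Commute.mul_left (mem_center_iff.1 hz₀ d).symm (Commute.refl d)
  obtain ⟨y, hy, z, hz, j, hj, rfl⟩ := exists_eq_mul_mul_pow_of_not_commute hG hdb x
  obtain ⟨i, rfl⟩ := exists_pow_eq_of_mem_of_card_prime
    (card_center_of_card_eq_prime_cube hG hG') hz₀ (mt mul_inv_eq_one.1 hne) hz
  obtain ⟨k, hk⟩ : y * (d ^ i)⁻¹ ∈ Submonoid.powers d :=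
    mem_powers_iff_mem_zpowers.2 (mul_mem hy (inv_mem (pow_mem (mem_zpowers d) i)))
  refine ⟨k, p * i + j, ?_⟩
  calc y * (h * d⁻¹) ^ i * b ^ j = y * ((d ^ i)⁻¹ * h ^ i) * b ^ j := by
        rw [hhd.inv_right.mul_pow, inv_pow, (hhd.pow_pow i i).inv_right.eq]
    _ = d ^ k * rowWalk p a b (p * i + j) := by
        rw [rowWalk_mul_add hj, ← hh, ← mul_assoc, ← hk, mul_assoc]

lemma le_hamiltonCompression_of_not_commute [Fintype G] (hcube : Fintype.card G = p ^ 3)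
    (h1 : (1 : G) ∉ S) (ha : a ∈ S) (hb : b ∈ S) (hab : ¬ Commute a b)
    (hrow : (b ^ (p - 1) * a) ^ p ≠ 1 ∨ b ^ (p - 1) * a ≠ a * b⁻¹) :
    p ≤ hamiltonCompression (cayleyGraph S) := by
  have hp : p.Prime := Fact.out
  have hcard : Fintype.card G = p * (p * p) := by rw [hcube]; ring
  have hG : Nat.card G = p ^ 3 := Nat.card_eq_fintype_card.trans hcube
  have hG' := not_isMulCommutative_of_not_commute hab
  have hwalk := isTwistedWalk_rowWalk ha hb hp.pos p
  by_cases hpow : (b ^ (p - 1) * a) ^ p = 1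
  · rw [hpow] at hwalk
    have hpp : 0 < p * p := Nat.mul_pos hp.pos hp.pos
    have hzero : rowWalk p a b 0 = 1 := by simp [rowWalk]
    have hone : rowWalk p a b 1 = b := by simpa using rowWalk_mul_add hp.one_lt a b 0
    have hcover := exists_eq_pow_mul_rowWalk hG hab (hrow.resolve_left (not_not.2 hpow))
    refine (hwalk.modifyStep hpp (d := a * b⁻¹) ?_).le_hamiltonCompression ?_ hcard
      (hwalk.surjective_modifyStep hpp hcover) h1
    · simpa [hzero, hone] using ha
    · rw [mul_inv_pow_eq_pow_pred_mul_pow hG hG', hpow]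
  · exact hwalk.le_hamiltonCompression
      (pow_eq_one_of_mem_center_of_card_eq_prime_cube hG hG'
        (pow_mem_center_of_card_eq_prime_cube hG hG' _)) hcard (surjective_rowWalk hG hab hpow) h1

end RowWalk

section ChoiceOfGenerators

variable {G : Type*} [Group G] {a b : G}

lemma commute_of_odd_of_pow_mul_eq {p k : ℕ} (hp : Odd p) (hcenter : a ^ p ∈ Subgroup.center G)
    (h : b ^ k * a = a * b⁻¹) (h' : b ^ k * a⁻¹ = a⁻¹ * b⁻¹) : Commute a b := by
  have hconj : a * b⁻¹ * a⁻¹ = a⁻¹ * b⁻¹ * a := by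
    rw [← h, ← h', mul_inv_cancel_right, inv_mul_cancel_right]
  have hsq : Commute (a ^ 2) b := by
    refine Commute.inv_right_iff.1 ?_
    calc a ^ 2 * b⁻¹ = a * (a * b⁻¹ * a⁻¹) * a := by rw [sq]; group
      _ = b⁻¹ * a ^ 2 := by rw [hconj, sq]; group
  obtain ⟨m, rfl⟩ := hp
  have hpow : Commute (a ^ (2 * m + 1)) b := (Subgroup.mem_center_iff.1 hcenter b).symm
  rw [pow_succ, pow_mul] at hpow
  simpa using (hsq.pow_left m).inv_left.mul_left hpow

lemma commute_of_mul_eq_mul_inv (h : b * a = a * b⁻¹) (h' : a * b = b * a⁻¹)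
    (hsq : (a * b) ^ 2 = 1) : Commute a b := by
  have hb : b * b = 1 := by
    rw [← conj_eq_one_iff (a := a)]
    calc a * (b * b) * a⁻¹ = a * b * (b * a⁻¹) := by group
      _ = 1 := by rw [← h', ← sq, hsq]
  rw [Commute, SemiconjBy, h, inv_eq_of_mul_eq_one_left hb]

lemma exists_not_commute_pow_ne_one_or_ne {p : ℕ} [Fact p.Prime] (hG : Nat.card G = p ^ 3)
    {S : Set G} (hS : S⁻¹ = S) (ha : a ∈ S) (hb : b ∈ S) (hab : ¬ Commute a b) :
    ∃ u ∈ S, ∃ v ∈ S, ¬ Commute u v ∧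
      ((v ^ (p - 1) * u) ^ p ≠ 1 ∨ v ^ (p - 1) * u ≠ u * v⁻¹) := by
  by_cases hne : b ^ (p - 1) * a = a * b⁻¹
  swap
  · exact ⟨a, ha, b, hb, hab, Or.inr hne⟩
  rcases Nat.Prime.eq_two_or_odd' (Fact.out : p.Prime) with rfl | hodd
  · refine ⟨b, hb, a, ha, mt Commute.symm hab, ?_⟩
    by_contra! hswap
    simp only [Nat.add_one_sub_one, pow_one] at hne hswap
    exact hab (commute_of_mul_eq_mul_inv hne hswap.2 hswap.1)
  · have hcenter := pow_mem_center_of_card_eq_prime_cube hG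
      (not_isMulCommutative_of_not_commute hab) a
    exact ⟨a⁻¹, hS ▸ Set.inv_mem_inv.2 ha, b, hb, mt Commute.inv_left_iff.1 hab,
      Or.inr fun h => hab (commute_of_odd_of_pow_mul_eq hodd hcenter hne (by simpa using h))⟩

lemma exists_not_commute_of_closure_eq_top (hG : ¬ IsMulCommutative G) {S : Set G}
    (hS : Subgroup.closure S = ⊤) : ∃ a ∈ S, ∃ b ∈ S, ¬ Commute a b := by
  by_contra! hcomm
  have := Subgroup.isMulCommutative_closure hcomm
  exact hG <| isMulCommutative_iff.2 fun a b =>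
    setLike_mul_comm (s := Subgroup.closure S) (hS ▸ Subgroup.mem_top a) (hS ▸ Subgroup.mem_top b)

end ChoiceOfGenerators

/-- If `G` is a non-abelian group of order `p³` (`p` prime) and
`S` a symmetric generating set with `1 ∉ S`, then `κ(Cay(G,S)) ≥ p`. -/
theorem stmt13 {G : Type*} [Group G] [Fintype G] (p : ℕ) (hp : p.Prime)
    (hcard : Fintype.card G = p ^ 3) (hnonab : ∃ a b : G, a * b ≠ b * a)
    (S : Set G) (hsymm : S⁻¹ = S) (h1 : (1 : G) ∉ S)
    (hgen : Subgroup.closure S = ⊤) :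
    p ≤ hamiltonCompression (cayleyGraph S) := by
  have : Fact p.Prime := ⟨hp⟩
  obtain ⟨x, y, hxy⟩ := hnonab
  obtain ⟨a, ha, b, hb, hab⟩ :=
    exists_not_commute_of_closure_eq_top (not_isMulCommutative_of_not_commute hxy) hgen
  obtain ⟨u, hu, v, hv, huv, hrow⟩ := exists_not_commute_pow_ne_one_or_ne
    (Nat.card_eq_fintype_card.trans hcard) hsymm ha hb hab
  exact le_hamiltonCompression_of_not_commute hcard h1 hu hv huv hrow
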